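/- arXiv:2512.14378 — 3 statements merged into one kernel-verified Lean document; each statement's English description precedes it below -/
import Mathlib

section
/- Let n ≥ 8 be divisible by 4, let H be a saturated orthogonal array OA(n,n−1,2,2), and let c_{del} be one fixed column of H. Then the sum of J₃(S)² over all unordered 3-subsets S of the remaining n−2 columns of H equals n²(n−2)(n−4)/6. -/
/-!
The sum of `J_s(S)²` over the `s`-subsets `S` of a set of columns equals the sum, over all pairs of
rows, of the `s`-th elementary symmetric function of the entrywise product of the two rows on these
columns. For a saturated design, bordering by a column of ones gives a Hadamard matrix, whose rows
are orthogonal too. So the power sums of that entrywise product are known: the even ones count the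
columns, as the entries square to `1`, and the odd ones equal the inner product of the two
rows on these columns. Newton's identity for the third elementary symmetric function then expresses
every summand through the entries in the deleted column, which sums to zero.
-/

open Finset

section Newton

variable {κ R : Type*} [CommRing R]

theorem mul_sum_powersetCard_prod (s : Finset κ) (x : κ → R) (k : ℕ) :
    k * ∑ S ∈ s.powersetCard k, ∏ j ∈ S, x j =
      (-1) ^ (k + 1) * ∑ m ∈ range k,
        (-1) ^ m * (∑ S ∈ s.powersetCard m, ∏ j ∈ S, x j) * ∑ j ∈ s, x j ^ (k - m) := by
  have aeval_esymm (m : ℕ) : MvPolynomial.aeval (fun j : s ↦ x j) (MvPolynomial.esymm s R m) =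
      ∑ S ∈ s.powersetCard m, ∏ j ∈ S, x j := by
    rw [MvPolynomial.aeval_esymm_eq_multiset_esymm, ← esymm_map_val]
    congr 1
    exact Multiset.attach_map_val' s.val x
  have aeval_psum (m : ℕ) : MvPolynomial.aeval (fun j : s ↦ x j) (MvPolynomial.psum s R m) =
      ∑ j ∈ s, x j ^ m := by
    simp [MvPolynomial.psum, ← sum_coe_sort s]
  have newton := congrArg (MvPolynomial.aeval fun j : s ↦ x j) (MvPolynomial.mul_esymm_eq_sum s R k)
  simp only [map_mul, map_sum, map_pow, map_neg, map_one, map_natCast, aeval_esymm, aeval_psum]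
    at newton
  rw [newton, sum_filter, Nat.sum_antidiagonal_eq_sum_range_succ_mk, sum_range_succ,
    if_neg (lt_irrefl k), add_zero]
  exact congrArg _ (sum_congr rfl fun m hm ↦ if_pos (mem_range.1 hm))

theorem two_mul_sum_powersetCard_two_prod (s : Finset κ) (x : κ → R) :
    2 * ∑ S ∈ s.powersetCard 2, ∏ j ∈ S, x j = (∑ j ∈ s, x j) ^ 2 - ∑ j ∈ s, x j ^ 2 := by
  have newton := mul_sum_powersetCard_prod s x 2
  simp only [sum_range_succ, range_zero, sum_empty, powersetCard_zero, powersetCard_one,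
    sum_singleton, sum_map, Function.Embedding.coeFn_mk, prod_empty, prod_singleton,
    Nat.reduceSub, Nat.cast_ofNat, pow_one] at newton
  linear_combination newton

theorem six_mul_sum_powersetCard_three_prod (s : Finset κ) (x : κ → R) :
    6 * ∑ S ∈ s.powersetCard 3, ∏ j ∈ S, x j =
      (∑ j ∈ s, x j) ^ 3 - 3 * (∑ j ∈ s, x j) * ∑ j ∈ s, x j ^ 2 + 2 * ∑ j ∈ s, x j ^ 3 := by
  have newton := mul_sum_powersetCard_prod s x 3
  simp only [sum_range_succ, range_zero, sum_empty, powersetCard_zero, powersetCard_one,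
    sum_singleton, sum_map, Function.Embedding.coeFn_mk, prod_empty, prod_singleton,
    Nat.reduceSub, Nat.cast_ofNat, pow_one] at newton
  linear_combination 2 * newton + (∑ j ∈ s, x j) * two_mul_sum_powersetCard_two_prod s x

theorem six_mul_sum_powersetCard_three_prod_of_sq_eq_one {s : Finset κ} {x : κ → R}
    (hx : ∀ j ∈ s, x j ^ 2 = 1) :
    6 * ∑ S ∈ s.powersetCard 3, ∏ j ∈ S, x j =
      (∑ j ∈ s, x j) ^ 3 - (3 * #s - 2) * ∑ j ∈ s, x j := by
  have sum_sq : ∑ j ∈ s, x j ^ 2 = #s := by simp [sum_congr rfl hx]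
  have sum_cube : ∑ j ∈ s, x j ^ 3 = ∑ j ∈ s, x j :=
    sum_congr rfl fun j hj ↦ by rw [pow_succ, hx j hj, one_mul]
  rw [six_mul_sum_powersetCard_three_prod, sum_sq, sum_cube]
  ring

end Newton

theorem mul_eq_smul_one_comm_of_card_eq {m n R : Type*} [Fintype m] [Fintype n] [DecidableEq m]
    [DecidableEq n] [CommRing R] (h : Fintype.card m = Fintype.card n) {c : R} (hc : IsRegular c)
    {A : Matrix m n R} {B : Matrix n m R} (hAB : A * B = c • 1) : B * A = c • 1 := by
  let e : n ≃ m := Fintype.equivOfCardEq h.symm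
  let A' := A.submatrix e id
  let B' := B.submatrix id e
  have hAB' : A' * B' = c • 1 := by
    rw [← Matrix.submatrix_mul _ _ _ _ _ Function.bijective_id, hAB]
    ext
    simp [Matrix.one_apply]
  have hBA' : B' * A' = B * A := B.submatrix_mul_equiv A id e id
  have hdet : IsRegular (A'.det * B'.det) := by
    rw [← Matrix.det_mul, hAB', Matrix.det_smul, Matrix.det_one, mul_one]
    exact hc.pow _
  apply (Matrix.isRegular_of_isLeftRegular_det hdet.of_mul_left.left).left
  change A' * (B * A) = A' * (c • 1)
  rw [← hBA', ← mul_assoc, hAB', smul_mul_assoc, one_mul, mul_smul_comm, mul_one]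

section Design

variable {ι κ R : Type*} [Fintype ι] [CommRing R]

/-- The `J`-characteristic of the set `S` of columns of a design `H`; its order is `#S`. -/
def jChar (H : Matrix ι κ R) (S : Finset κ) : R :=
  ∑ i, ∏ j ∈ S, H i j

theorem sum_jChar_sq (H : Matrix ι κ R) (T : Finset (Finset κ)) :
    ∑ S ∈ T, jChar H S ^ 2 = ∑ i, ∑ k, ∑ S ∈ T, ∏ j ∈ S, H i j * H k j := by
  simp only [jChar, sq, sum_mul_sum, ← prod_mul_distrib]
  rw [sum_comm]
  exact sum_congr rfl fun i _ ↦ sum_comm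

/-- Saturated two-level orthogonal arrays of strength two, with runs indexed by `ι` and factors by
`κ`. The levels are square roots of `1`, that is `1` and `-1` when `R` is an integral domain. -/
structure IsSaturatedOA [Fintype κ] (H : Matrix ι κ R) : Prop where
  card_eq : Fintype.card ι = Fintype.card κ + 1
  sq_eq_one (i : ι) (j : κ) : H i j ^ 2 = 1
  sum_col (j : κ) : ∑ i, H i j = 0
  hasOrthogonalCols : H.HasOrthogonalCols

namespace IsSaturatedOA

open Matrix

variable [Fintype κ] {H : Matrix ι κ R}

theorem transpose_mul_self [DecidableEq κ] (hH : IsSaturatedOA H) :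
    Hᵀ * H = (Fintype.card ι : R) • 1 := by
  ext j k
  obtain rfl | hjk := eq_or_ne j k
  · simp [mul_apply, ← sq, hH.sq_eq_one]
  · rw [Matrix.smul_apply, one_apply_ne hjk, smul_zero]
    exact hH.hasOrthogonalCols hjk

theorem transpose_mul_self_fromCols_one [DecidableEq κ] (hH : IsSaturatedOA H) :
    (fromCols (replicateCol Unit 1) H)ᵀ * fromCols (replicateCol Unit 1) H =
      (Fintype.card ι : R) • 1 := by
  rw [transpose_fromCols, fromRows_mul_fromCols, hH.transpose_mul_self, ← fromBlocks_one,
    fromBlocks_smul]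
  congr 1 <;> ext <;> simp [mul_apply, hH.sum_col]

theorem self_mul_transpose_fromCols_one [DecidableEq ι] (hH : IsSaturatedOA H)
    (hn : IsRegular (Fintype.card ι : R)) :
    fromCols (replicateCol Unit 1) H * (fromCols (replicateCol Unit 1) H)ᵀ =
      (Fintype.card ι : R) • 1 := by
  classical
  exact mul_eq_smul_one_comm_of_card_eq (by simp [hH.card_eq, add_comm]) hn
    hH.transpose_mul_self_fromCols_one

theorem sum_row_mul_row [DecidableEq ι] (hH : IsSaturatedOA H)
    (hn : IsRegular (Fintype.card ι : R)) (i k : ι) :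
    ∑ j, H i j * H k j = (if i = k then (Fintype.card ι : R) else 0) - 1 := by
  have h := congrFun₂ (hH.self_mul_transpose_fromCols_one hn) i k
  rw [transpose_fromCols, fromCols_mul_fromRows] at h
  rw [eq_sub_iff_add_eq']
  simpa [mul_apply, one_apply] using h

variable [DecidableEq ι] [DecidableEq κ]

theorem six_mul_sum_powersetCard_three_row_mul_row (hH : IsSaturatedOA H)
    (hn : IsRegular (Fintype.card ι : R)) (c : κ) (i k : ι) :
    6 * ∑ S ∈ (univ.erase c).powersetCard 3, ∏ j ∈ S, H i j * H k j =
      ((Fintype.card ι : R) - 4) * (3 * (1 + H i c * H k c) +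
        if i = k then (Fintype.card ι : R) * (Fintype.card ι - 5) else 0) := by
  have card_erase : (#(univ.erase c) : R) = Fintype.card ι - 2 := by
    rw [cast_card_erase_of_mem (mem_univ c), card_univ, hH.card_eq]
    push_cast
    ring
  have sq_eq_one (j : κ) : (H i j * H k j) ^ 2 = 1 := by
    rw [mul_pow, hH.sq_eq_one, hH.sq_eq_one, one_mul]
  have sum_erase := hH.sum_row_mul_row hn i k
  rw [← sum_erase_add _ _ (mem_univ c), ← eq_sub_iff_add_eq] at sum_erase
  rw [six_mul_sum_powersetCard_three_prod_of_sq_eq_one fun j _ ↦ sq_eq_one j, card_erase, sum_erase]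
  obtain rfl | hik := eq_or_ne i k
  · rw [if_pos rfl, if_pos rfl, ← sq, hH.sq_eq_one]
    ring
  · rw [if_neg hik, if_neg hik]
    linear_combination (-3 - H i c * H k c) * sq_eq_one c

end IsSaturatedOA

theorem sum_J3_sq_delete_one_general [Fintype κ] [DecidableEq κ] {H : Matrix ι κ R}
    (hH : IsSaturatedOA H) (hn : IsRegular (Fintype.card ι : R)) (c : κ) :
    6 * ∑ S ∈ (univ.erase c).powersetCard 3, jChar H S ^ 2 =
      (Fintype.card ι : R) ^ 2 * (Fintype.card ι - 2) * (Fintype.card ι - 4) := by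
  classical
  simp only [sum_jChar_sq, mul_sum, hH.six_mul_sum_powersetCard_three_row_mul_row hn c]
  simp only [← mul_sum, sum_add_distrib, hH.sum_col, mul_zero, sum_ite_eq, mem_univ, if_true,
    sum_const, card_univ, nsmul_eq_mul, mul_one, add_zero]
  ring

end Design

/-- Deleting one fixed column from a saturated `OA(n, n-1, 2, 2)`,
the sum of `J₃(S)²` over all unordered 3-subsets of the remaining `n-2` columns
equals `n²(n-2)(n-4)/6`. -/
theorem sum_J3_sq_delete_one (n : ℕ) (hn : 8 ≤ n) (h4 : 4 ∣ n)
    (H : Fin n → Fin (n - 1) → ℤ)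
    (hpm : ∀ i j, H i j = 1 ∨ H i j = -1)
    (hbal : ∀ j, ∑ i : Fin n, H i j = 0)
    (horth : ∀ j k : Fin (n - 1), j ≠ k → ∑ i : Fin n, H i j * H i k = 0)
    (cdel : Fin (n - 1)) :
    ∑ S ∈ ((Finset.univ : Finset (Fin (n - 1))).erase cdel).powersetCard 3,
        (∑ i : Fin n, ∏ j ∈ S, H i j) ^ 2
      = (n : ℤ) ^ 2 * ((n : ℤ) - 2) * ((n : ℤ) - 4) / 6 := by
  have hH : IsSaturatedOA (R := ℤ) H :=
    ⟨by rw [Fintype.card_fin, Fintype.card_fin]; omega, fun i j ↦ sq_eq_one_iff.2 (hpm i j), hbal,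
      fun j k ↦ horth j k⟩
  have hreg : IsRegular (Fintype.card (Fin n) : ℤ) := .of_ne_zero (by rw [Fintype.card_fin]; omega)
  have hsum := sum_J3_sq_delete_one_general hH hreg cdel
  rw [Fintype.card_fin] at hsum
  exact (Int.ediv_eq_of_eq_mul_right (by norm_num) hsum.symm).symm
end

section
/- Let n ≥ 12 be divisible by 4, let H be a saturated orthogonal array OA(n,n−1,2,2), let three distinct fixed columns a,b,c of H be removed, and let d be the nonnegative integer with 4d = #{rows i : a_i·b_i·c_i = +1}. Then the sum of J₄(S)² over all unordered 4-subsets S of the remaining n−4 columns equals n²(n−4)(n²−15n+62)/24 − 16d(n−4d). -/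
open Finset

/- Adjoining a constant column to `H` gives a Hadamard matrix `A` of order `n`, and the removed
triple becomes the column set `D = {1, a, b, c}`, with `J₄(D) = J₃(a, b, c) = 8d - n`.

Expanding `J₄(S)²` as a sum over pairs of rows `(i, k)` turns `∑ J₄(S)²` over `S ⊆ T` into
`∑_{i,k} e₄(x)`, where `e₄` is the fourth elementary symmetric function of the signs
`x_j = A i j * A k j`, `j ∈ T`. By Newton's identities `24 e₄` is a quartic in `p_T = ∑_{j ∈ T} x_j`
whose leading coefficient does not depend on `T`. Row orthogonality gives `p_{Dᶜ} = -p_D` when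
`i ≠ k`, so the quartic terms cancel in the difference between `Dᶜ` and `D`, and what remains is
determined by `∑_{i,k} p_D² = #D n²`, which is column orthogonality. -/

section NewtonIdentities

variable {κ R : Type*} [CommRing R]

theorem succ_mul_sum_powersetCard_succ_prod (s : Finset κ) (f : κ → R) (k : ℕ) :
    (k + 1) * ∑ S ∈ s.powersetCard (k + 1), ∏ j ∈ S, f j =
      (-1) ^ k * ∑ m ∈ range (k + 1),
        (-1) ^ m * (∑ S ∈ s.powersetCard m, ∏ j ∈ S, f j) * ∑ j ∈ s, f j ^ (k + 1 - m) := by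
  have aeval_esymm (m : ℕ) : MvPolynomial.aeval (fun j : s ↦ f j) (MvPolynomial.esymm s R m) =
      ∑ S ∈ s.powersetCard m, ∏ j ∈ S, f j := by
    rw [MvPolynomial.aeval_esymm_eq_multiset_esymm, ← Finset.esymm_map_val]
    exact congrArg (Multiset.esymm · m) (Multiset.attach_map_val' s.val f)
  have aeval_psum (m : ℕ) : MvPolynomial.aeval (fun j : s ↦ f j) (MvPolynomial.psum s R m) =
      ∑ j ∈ s, f j ^ m := by
    simp [MvPolynomial.psum, sum_attach s (f · ^ m)]
  have newton := MvPolynomial.mul_esymm_eq_sum s R (k + 1)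
  rw [sum_filter, Nat.sum_antidiagonal_eq_sum_range_succ_mk, sum_range_succ, if_neg (lt_irrefl _),
    add_zero, sum_congr rfl fun m hm ↦ if_pos (mem_range.1 hm)] at newton
  simpa [aeval_esymm, aeval_psum, pow_add, -MvPolynomial.aeval_eq_eval,
    -MvPolynomial.coe_aeval_eq_eval] using
    congrArg (MvPolynomial.aeval fun j : s ↦ f j) newton

theorem twentyFour_mul_sum_powersetCard_four_prod (s : Finset κ) (f : κ → R) :
    24 * ∑ S ∈ s.powersetCard 4, ∏ j ∈ S, f j =
      (∑ j ∈ s, f j) ^ 4 - 6 * (∑ j ∈ s, f j) ^ 2 * ∑ j ∈ s, f j ^ 2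
        + 3 * (∑ j ∈ s, f j ^ 2) ^ 2 + 8 * (∑ j ∈ s, f j) * ∑ j ∈ s, f j ^ 3
        - 6 * ∑ j ∈ s, f j ^ 4 := by
  have newton_one := succ_mul_sum_powersetCard_succ_prod s f 0
  have newton_two := succ_mul_sum_powersetCard_succ_prod s f 1
  have newton_three := succ_mul_sum_powersetCard_succ_prod s f 2
  have newton_four := succ_mul_sum_powersetCard_succ_prod s f 3
  simp only [sum_range_succ, range_zero, sum_empty, powersetCard_zero, sum_singleton, prod_empty,
    Nat.reduceAdd, Nat.reduceSub, pow_one] at newton_one newton_two newton_three newton_four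
  set p₁ := ∑ j ∈ s, f j
  set p₂ := ∑ j ∈ s, f j ^ 2
  set p₃ := ∑ j ∈ s, f j ^ 3
  linear_combination 6 * newton_four + 2 * p₁ * newton_three + (p₁ ^ 2 - 3 * p₂) * newton_two
    + (p₁ ^ 3 - 5 * p₁ * p₂ + 6 * p₃) * newton_one

theorem twentyFour_mul_sum_powersetCard_four_prod_of_sq_eq_one (s : Finset κ) {f : κ → R}
    (hf : ∀ j ∈ s, f j ^ 2 = 1) :
    24 * ∑ S ∈ s.powersetCard 4, ∏ j ∈ S, f j =
      (∑ j ∈ s, f j) ^ 4 + (8 - 6 * #s) * (∑ j ∈ s, f j) ^ 2 + 3 * (#s : R) ^ 2 - 6 * #s := by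
  have sum_sq : ∑ j ∈ s, f j ^ 2 = #s := by simp [sum_congr rfl hf]
  have sum_cube : ∑ j ∈ s, f j ^ 3 = ∑ j ∈ s, f j :=
    sum_congr rfl fun j hj ↦ by rw [pow_succ, hf j hj, one_mul]
  have sum_fourth : ∑ j ∈ s, f j ^ 4 = #s := by
    rw [← sum_sq]
    exact sum_congr rfl fun j hj ↦ by rw [pow_mul (f j) 2 2, hf j hj, one_pow]
  rw [twentyFour_mul_sum_powersetCard_four_prod, sum_sq, sum_cube, sum_fourth]
  ring

end NewtonIdentities

section JCharacteristic

variable {ι κ R : Type*} [Fintype ι] [CommSemiring R]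

/-- The `J`-characteristic of the set of columns `S` of a design `H` with rows `ι` and columns `κ`;
its order is `#S`. -/
def jCharacteristic (H : Matrix ι κ R) (S : Finset κ) : R :=
  ∑ i, ∏ j ∈ S, H i j

theorem sum_jCharacteristic_sq (H : Matrix ι κ R) (𝒮 : Finset (Finset κ)) :
    ∑ S ∈ 𝒮, jCharacteristic H S ^ 2 = ∑ i, ∑ k, ∑ S ∈ 𝒮, ∏ j ∈ S, H i j * H k j := by
  simp only [jCharacteristic, sq, sum_mul_sum, ← prod_mul_distrib]
  rw [sum_comm]
  exact sum_congr rfl fun i _ ↦ sum_comm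

theorem sum_eq_two_mul_card_filter_sub_card {f : ι → ℤ} (hf : ∀ i, f i = 1 ∨ f i = -1) :
    ∑ i, f i = 2 * #{i | f i = 1} - Fintype.card ι := by
  have eq_indicator (i : ι) : f i = 2 * (if f i = 1 then 1 else 0) - 1 := by
    rcases hf i with h | h <;> simp [h]
  rw [sum_congr rfl fun i _ ↦ eq_indicator i, sum_sub_distrib, ← mul_sum, sum_boole]
  simp

theorem jCharacteristic_eq_two_mul_card_filter_sub_card {H : Matrix ι κ ℤ}
    (hH : ∀ i j, H i j = 1 ∨ H i j = -1) (S : Finset κ) :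
    jCharacteristic H S = 2 * #{i | ∏ j ∈ S, H i j = 1} - Fintype.card ι := by
  simp only [← Unitary.mem_iff_eq_one_or_eq_neg_one] at hH
  exact sum_eq_two_mul_card_filter_sub_card fun i ↦
    Unitary.mem_iff_eq_one_or_eq_neg_one.1 (prod_mem fun j _ ↦ hH i j)

end JCharacteristic

section Hadamard

variable {n R : Type*} [Fintype n] [DecidableEq n] [CommRing R] [StarRing R] [TrivialStar R]
  {A : Matrix n n R}

theorem sq_apply_of_isHadamard (hA : A.IsHadamard) (i j : n) : A i j ^ 2 = 1 := by
  simpa [sq] using Unitary.mul_star_self_of_mem (hA.apply_mem i j)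

theorem sum_compl_mul_of_isHadamard (hA : A.IsHadamard) (D : Finset n) (i k : n) :
    ∑ j ∈ Dᶜ, A i j * A k j =
      (if i = k then (Fintype.card n : R) else 0) - ∑ j ∈ D, A i j * A k j := by
  rw [eq_sub_iff_add_eq, sum_compl_add_sum]
  simpa [Matrix.mul_apply, Matrix.one_apply] using congrFun₂ hA.mul_conjTranspose i k

theorem sum_sum_mul_sq_of_isHadamard (hA : A.IsHadamard) (D : Finset n) :
    ∑ i, ∑ k, (∑ j ∈ D, A i j * A k j) ^ 2 = #D * (Fintype.card n : R) ^ 2 := by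
  have column_orthogonality (j l : n) :
      ∑ i, A i j * A i l = if j = l then (Fintype.card n : R) else 0 := by
    simpa [Matrix.mul_apply, Matrix.one_apply] using congrFun₂ hA.conjTranspose_mul j l
  calc ∑ i, ∑ k, (∑ j ∈ D, A i j * A k j) ^ 2
      = ∑ i, ∑ k, ∑ j ∈ D, ∑ l ∈ D, (A i j * A i l) * (A k j * A k l) := by
        simp only [sq, sum_mul_sum, mul_mul_mul_comm]
    _ = ∑ j ∈ D, ∑ l ∈ D, (∑ i, A i j * A i l) ^ 2 := by
        simp only [sum_comm (s := univ) (t := D), sq, sum_mul_sum]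
    _ = #D * (Fintype.card n : R) ^ 2 := by
        simp [column_orthogonality, ite_pow, sum_ite_mem]

theorem twentyFour_mul_sum_prod_compl_sub_of_isHadamard (hA : A.IsHadamard) (D : Finset n)
    (i k : n) :
    24 * (∑ S ∈ Dᶜ.powersetCard 4, ∏ j ∈ S, A i j * A k j
        - ∑ S ∈ D.powersetCard 4, ∏ j ∈ S, A i j * A k j) =
      (#Dᶜ - #D) * (3 * Fintype.card n - 6 - 6 * (∑ j ∈ D, A i j * A k j) ^ 2
        + if i = k then Fintype.card n * ((#Dᶜ : R) ^ 2 + (#D : R) ^ 2 + 8 - 6 * #Dᶜ) else 0) := by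
  have sq_eq_one (T : Finset n) : ∀ j ∈ T, (A i j * A k j) ^ 2 = 1 := by
    simp [mul_pow, sq_apply_of_isHadamard hA]
  have card_add : (#D : R) + #Dᶜ = Fintype.card n := by
    rw [← Nat.cast_add, card_add_card_compl]
  rw [mul_sub, twentyFour_mul_sum_powersetCard_four_prod_of_sq_eq_one _ (sq_eq_one _),
    twentyFour_mul_sum_powersetCard_four_prod_of_sq_eq_one _ (sq_eq_one _),
    sum_compl_mul_of_isHadamard hA, ← card_add]
  split_ifs with hik
  · have sum_eq_card : ∑ j ∈ D, A i j * A k j = #D := by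
      simp [hik, ← sq, sq_apply_of_isHadamard hA]
    rw [sum_eq_card]
    ring
  · ring

theorem twentyFour_mul_sum_jCharacteristic_sq_compl_sub_of_isHadamard (hA : A.IsHadamard)
    (D : Finset n) :
    24 * (∑ S ∈ Dᶜ.powersetCard 4, jCharacteristic A S ^ 2
        - ∑ S ∈ D.powersetCard 4, jCharacteristic A S ^ 2) =
      (Fintype.card n : R) ^ 2 * (#Dᶜ - #D) *
        ((#Dᶜ : R) ^ 2 + (#D : R) ^ 2 - 3 * Fintype.card n + 2) := by
  have card_add : (#D : R) + #Dᶜ = Fintype.card n := by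
    rw [← Nat.cast_add, card_add_card_compl]
  rw [sum_jCharacteristic_sq, sum_jCharacteristic_sq]
  simp only [← sum_sub_distrib, mul_sum, twentyFour_mul_sum_prod_compl_sub_of_isHadamard hA]
  simp only [← mul_sum, sum_add_distrib, sum_sub_distrib, sum_sum_mul_sq_of_isHadamard hA]
  simp only [sum_const, card_univ, nsmul_eq_mul, sum_ite_eq, mem_univ, ↓reduceIte]
  rw [← card_add]
  ring

end Hadamard

section SaturatedOA

variable {ι κ : Type*} [Fintype ι] [Fintype κ]

/-- A saturated orthogonal array `OA(n, n - 1, 2, 2)` with `n` runs indexed by `ι` and `n - 1`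
factors indexed by `κ`, its two levels being `±1`. -/
structure IsSaturatedOA_s7 (H : Matrix ι κ ℤ) : Prop where
  card_add_one : Fintype.card κ + 1 = Fintype.card ι
  eq_one_or_neg_one : ∀ i j, H i j = 1 ∨ H i j = -1
  sum_eq_zero : ∀ j, ∑ i, H i j = 0
  sum_mul_eq_zero : ∀ j k, j ≠ k → ∑ i, H i j * H i k = 0

/-- The design `H` with a column of ones adjoined, made into a square matrix by an indexing `e` of
its rows; the new column has index `none`. -/
def adjoinOnes (H : Matrix ι κ ℤ) (e : Option κ ≃ ι) : Matrix (Option κ) (Option κ) ℤ :=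
  .of fun o p ↦ p.elim 1 (H (e o))

theorem jCharacteristic_adjoinOnes_map_some (H : Matrix ι κ ℤ) (e : Option κ ≃ ι) (S : Finset κ) :
    jCharacteristic (adjoinOnes H e) (S.map .some) = jCharacteristic H S := by
  simp [jCharacteristic, adjoinOnes, ← e.sum_comp]

theorem jCharacteristic_adjoinOnes_insertNone (H : Matrix ι κ ℤ) (e : Option κ ≃ ι) (S : Finset κ) :
    jCharacteristic (adjoinOnes H e) S.insertNone = jCharacteristic H S := by
  simp [jCharacteristic, adjoinOnes, ← e.sum_comp]

theorem compl_insertNone {α : Type*} [Fintype α] [DecidableEq α] (s : Finset α) :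
    s.insertNoneᶜ = sᶜ.map .some := by
  ext (_ | _) <;> simp

theorem IsSaturatedOA_s7.isHadamard_adjoinOnes [DecidableEq κ] {H : Matrix ι κ ℤ}
    (hH : IsSaturatedOA_s7 H) (e : Option κ ≃ ι) : (adjoinOnes H e).IsHadamard := by
  have sq_eq_one (i : ι) (j : κ) : H i j * H i j = 1 := by
    rcases hH.eq_one_or_neg_one i j with h | h <;> simp [h]
  rw [← Matrix.isHadamard_conjTranspose_iff]
  refine .of_mul_conjTranspose ?_ ?_ (.of_ne_zero (by simp; lia))
  · rintro (_ | j) o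
    · simp [adjoinOnes, one_mem]
    · simpa [adjoinOnes, Unitary.mem_iff_eq_one_or_eq_neg_one] using hH.eq_one_or_neg_one (e o) j
  · ext p q
    rw [Matrix.conjTranspose_conjTranspose, Matrix.mul_apply, Matrix.smul_apply, Matrix.one_apply]
    rcases p with _ | j <;> rcases q with _ | l
    · simp [adjoinOnes]
    · simpa [adjoinOnes] using (e.sum_comp (H · l)).trans (hH.sum_eq_zero l)
    · simpa [adjoinOnes] using (e.sum_comp (H · j)).trans (hH.sum_eq_zero j)
    · have inner_eq : ∑ o, H (e o) j * H (e o) l =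
          if j = l then (Fintype.card κ : ℤ) + 1 else 0 := by
        rw [e.sum_comp (fun i ↦ H i j * H i l)]
        split_ifs with hjl
        · simp [hjl, sq_eq_one, ← hH.card_add_one]
        · exact hH.sum_mul_eq_zero j l hjl
      simpa [adjoinOnes] using inner_eq

theorem IsSaturatedOA_s7.twentyFour_mul_sum_jCharacteristic_sq_compl [DecidableEq κ] {H : Matrix ι κ ℤ}
    (hH : IsSaturatedOA_s7 H) {T : Finset κ} (hT : #T = 3) :
    24 * ∑ S ∈ Tᶜ.powersetCard 4, jCharacteristic H S ^ 2 =
      (Fintype.card ι : ℤ) ^ 2 * (Fintype.card ι - 8) *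
          ((Fintype.card ι : ℤ) ^ 2 - 11 * Fintype.card ι + 34)
        + 24 * jCharacteristic H T ^ 2 := by
  obtain ⟨e⟩ : Nonempty (Option κ ≃ ι) := Fintype.card_eq.1 (by simp [hH.card_add_one])
  have h := twentyFour_mul_sum_jCharacteristic_sq_compl_sub_of_isHadamard
    (hH.isHadamard_adjoinOnes e) T.insertNone
  have card_insertNone : #T.insertNone = 4 := by simp [hT]
  have sum_insertNone : ∑ S ∈ T.insertNone.powersetCard 4, jCharacteristic (adjoinOnes H e) S ^ 2 =
      jCharacteristic H T ^ 2 := by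
    rw [← card_insertNone, powersetCard_self, sum_singleton, jCharacteristic_adjoinOnes_insertNone]
  have sum_compl : ∑ S ∈ T.insertNoneᶜ.powersetCard 4, jCharacteristic (adjoinOnes H e) S ^ 2 =
      ∑ S ∈ Tᶜ.powersetCard 4, jCharacteristic H S ^ 2 := by
    rw [compl_insertNone, powersetCard_map, sum_map]
    exact sum_congr rfl fun S _ ↦ congrArg (· ^ 2) (jCharacteristic_adjoinOnes_map_some H e S)
  have card_compl : (#T.insertNoneᶜ : ℤ) = Fintype.card ι - 4 := by
    have card_add := card_add_card_compl T.insertNone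
    rw [card_insertNone, Fintype.card_option, hH.card_add_one] at card_add
    lia
  rw [sum_compl, sum_insertNone, card_compl, card_insertNone, Fintype.card_option,
    hH.card_add_one] at h
  linear_combination h

theorem sum_J4_sq_delete_three_general [DecidableEq κ] {H : Matrix ι κ ℤ} (hH : IsSaturatedOA_s7 H)
    {a b c : κ} (hab : a ≠ b) (hac : a ≠ c) (hbc : b ≠ c) {d : ℕ}
    (hd : 4 * d = #{i | H i a * H i b * H i c = 1}) :
    ∑ S ∈ (univ \ {a, b, c}).powersetCard 4, jCharacteristic H S ^ 2 =
      (Fintype.card ι : ℤ) ^ 2 * (Fintype.card ι - 4) *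
          ((Fintype.card ι : ℤ) ^ 2 - 15 * Fintype.card ι + 62) / 24
        - 16 * d * (Fintype.card ι - 4 * d) := by
  have hJ : jCharacteristic H {a, b, c} = 8 * d - Fintype.card ι := by
    have prod_eq (i : ι) : ∏ j ∈ {a, b, c}, H i j = H i a * H i b * H i c := by
      simp [prod_insert, hab, hac, hbc, mul_assoc]
    rw [jCharacteristic_eq_two_mul_card_filter_sub_card hH.eq_one_or_neg_one]
    simp only [prod_eq, ← hd]
    push_cast
    ring
  have h := hH.twentyFour_mul_sum_jCharacteristic_sq_compl
    (card_eq_three.2 ⟨a, b, c, hab, hac, hbc, rfl⟩)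
  rw [hJ, compl_eq_univ_sdiff] at h
  rw [eq_sub_iff_add_eq, eq_comm]
  exact Int.ediv_eq_of_eq_mul_right (by norm_num) (by linear_combination -h)

end SaturatedOA

/-- Deleting three distinct fixed columns `a, b, c` from a saturated
`OA(n, n-1, 2, 2)`, with `4d` the number of rows `i` with `aᵢ·bᵢ·cᵢ = +1`, the sum of
`J₄(S)²` over all unordered 4-subsets of the remaining `n-4` columns equals
`n²(n-4)(n²-15n+62)/24 - 16d(n-4d)`. -/
theorem sum_J4_sq_delete_three (n : ℕ) (hn : 12 ≤ n) (h4 : 4 ∣ n)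
    (H : Fin n → Fin (n - 1) → ℤ)
    (hpm : ∀ i j, H i j = 1 ∨ H i j = -1)
    (hbal : ∀ j, ∑ i : Fin n, H i j = 0)
    (horth : ∀ j k : Fin (n - 1), j ≠ k → ∑ i : Fin n, H i j * H i k = 0)
    (a b c : Fin (n - 1)) (hab : a ≠ b) (hac : a ≠ c) (hbc : b ≠ c)
    (d : ℕ)
    (hd : 4 * d =
      ((Finset.univ : Finset (Fin n)).filter (fun i => H i a * H i b * H i c = 1)).card) :
    ∑ S ∈ ((Finset.univ : Finset (Fin (n - 1))) \ {a, b, c}).powersetCard 4,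
        (∑ i : Fin n, ∏ j ∈ S, H i j) ^ 2
      = (n : ℤ) ^ 2 * ((n : ℤ) - 4) * ((n : ℤ) ^ 2 - 15 * (n : ℤ) + 62) / 24
        - 16 * (d : ℤ) * ((n : ℤ) - 4 * (d : ℤ)) := by
  simpa [jCharacteristic] using
    sum_J4_sq_delete_three_general (H := .of H) ⟨by simp; lia, hpm, hbal, horth⟩ hab hac hbc hd
end

section
/- Let n ≥ 8 be divisible by 4, let H be a saturated orthogonal array OA(n,n−1,2,2), and let H' be the n×(n−2) design obtained from H by deleting one fixed column. Let X be the n × ((n−2)(n−1)/2) two-level design whose columns are the n−2 columns of H' together with the interaction columns of all (n−2 choose 2) unordered pairs of distinct columns of H'. Then E(s²)(X) = n(n−4)/(n−3), and X is E(s²)-optimal: E(s²)(X) ≤ E(s²)(Y) for every n × ((n−2)(n−1)/2) balanced two-level design Y. -/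
open Finset

/-- The `E(s²)` value of an `n × m` two-level design `X` (columns indexed by `ι`,
`m = card ι`): the average of the squared off-diagonal entries of `XᵀX`. -/
noncomputable def Es2 {n : ℕ} {ι : Type} [Fintype ι] [DecidableEq ι]
    (X : Fin n → ι → ℚ) : ℚ :=
  (∑ i : ι, ∑ j : ι, if i ≠ j then (∑ r : Fin n, X r i * X r j) ^ 2 else 0) /
    ((Fintype.card ι : ℚ) * ((Fintype.card ι : ℚ) - 1))

/-!
Write `n` and `m` for the numbers of rows and columns of a design `X`. The Gram matrices `XᵀX` and
`XXᵀ` have the same Frobenius norm, so minimizing `E(s²)` over designs with columns of squared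
length `n` amounts to minimizing `‖XXᵀ‖²`. Balance makes the entries of `XXᵀ` sum to zero and the
column lengths fix its trace, so projecting `XXᵀ` orthogonally onto the line through `nI - J` writes
`E(s²)(X)` as a constant depending only on `n` and `m` plus a multiple of the squared distance of
`XXᵀ` from `(m / (n - 1)) (nI - J)`.

For a saturated orthogonal array `HHᵀ = nI - J`. Let `t` be the inner product of two rows after
deleting a column, and `ε = ±1` the product of their two deleted entries. With `k` columns left,
adding all interactions turns `t` into `t + (t² - k) / 2 = ((t + 1)² - (k + 1)) / 2`. For distinct
rows `t + 1 = -ε`, so the square no longer depends on the rows, and the augmented Gram matrix is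
exactly `((n - 2) / 2) (nI - J)`: the distance above vanishes.
-/

theorem sum_sq_dotProduct_rows {R ι K : Type*} [Fintype R] [Fintype ι] [CommSemiring K]
    (X : R → ι → K) :
    ∑ r, ∑ s, (X r ⬝ᵥ X s) ^ 2 = ∑ i, ∑ j, (∑ r, X r i * X r j) ^ 2 := by
  let M : Matrix R ι K := Matrix.of X
  calc
    _ = ((M * M.transpose) * (M * M.transpose)).trace := by
      simp [M, Matrix.trace, Matrix.mul_apply, dotProduct, sq, mul_comm]
    _ = ((M.transpose * M) * (M.transpose * M)).trace := by
      rw [Matrix.mul_assoc, Matrix.trace_mul_comm, Matrix.mul_assoc, Matrix.mul_assoc,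
        Matrix.mul_assoc]
    _ = _ := by simp [M, Matrix.trace, Matrix.mul_apply, sq, mul_comm]

theorem sum_sq_eq_sum_sq_add_two_mul_sum_lt {κ K : Type*} [Fintype κ] [LinearOrder κ]
    [CommSemiring K] (a : κ → K) :
    (∑ i, a i) ^ 2 = ∑ i, a i ^ 2 + 2 * ∑ p : {p : κ × κ // p.1 < p.2}, a p.1.1 * a p.1.2 := by
  have sum_gt : ∑ i, ∑ j, (if j < i then a i * a j else 0) =
      ∑ i, ∑ j, if i < j then a i * a j else 0 := by
    rw [sum_comm]
    simp only [mul_comm]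
  have sum_lt : ∑ p : {p : κ × κ // p.1 < p.2}, a p.1.1 * a p.1.2 =
      ∑ i, ∑ j, if i < j then a i * a j else 0 := by
    rw [← sum_subtype ({p : κ × κ | p.1 < p.2} : Finset (κ × κ)) (by simp)
      (fun p => a p.1 * a p.2), sum_filter, Fintype.sum_prod_type]
  calc
    (∑ i, a i) ^ 2 = ∑ i, ∑ j, ((if i = j then a i * a j else 0) +
        ((if j < i then a i * a j else 0) + if i < j then a i * a j else 0)) := by
      rw [sq, sum_mul_sum]
      refine sum_congr rfl fun i _ => sum_congr rfl fun j _ => ?_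
      rcases lt_trichotomy i j with h | rfl | h
      · simp [h, h.not_gt, h.ne]
      · simp
      · simp [h, h.not_gt, h.ne']
    _ = ∑ i, a i ^ 2 + 2 * ∑ p : {p : κ × κ // p.1 < p.2}, a p.1.1 * a p.1.2 := by
      simp only [sum_add_distrib, sum_gt, sum_lt, sum_ite_eq, mem_univ, if_true, sq, two_mul]

section GramDefect

variable {n : ℕ}

/-- The entries of `nI - J`, which is `n` times the projection of `ℚⁿ` onto the balanced vectors. -/
def scaledCentering (r s : Fin n) : ℚ := (if r = s then (n : ℚ) else 0) - 1

theorem sum_sq_sub_mul_scaledCentering (g : Fin n → Fin n → ℚ) (hg : ∑ r, ∑ s, g r s = 0)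
    (c : ℚ) :
    ∑ r, ∑ s, (g r s - c * scaledCentering r s) ^ 2 =
      ∑ r, ∑ s, g r s ^ 2 - 2 * c * n * ∑ r, g r r + c ^ 2 * n ^ 2 * (n - 1) := by
  have expand (r s : Fin n) : (g r s - c * scaledCentering r s) ^ 2 =
      g r s ^ 2 + 2 * c * g r s - 2 * c * n * (if r = s then g r s else 0) +
        c ^ 2 * (n * (n - 2) * (if r = s then 1 else 0) + 1) := by
    unfold scaledCentering
    split_ifs <;> ring
  simp only [expand, sum_add_distrib, sum_sub_distrib, ← mul_sum, hg, sum_ite_eq, mem_univ,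
    if_true, sum_const, card_univ, Fintype.card_fin, nsmul_eq_mul]
  ring

variable {ι : Type}

theorem normalized_of_sq_eq_one {X : Fin n → ι → ℚ} (hX : ∀ r i, X r i ^ 2 = 1) (i : ι) :
    ∑ r, X r i ^ 2 = n := by
  simp [hX]

variable [Fintype ι]

theorem sum_dotProduct_rows_of_balanced {X : Fin n → ι → ℚ} (hbal : ∀ i, ∑ r, X r i = 0) :
    ∑ r, ∑ s, X r ⬝ᵥ X s = 0 := by
  refine sum_eq_zero fun r _ => ?_
  rw [← dotProduct_sum]
  have : ∑ s, X s = 0 := funext fun i => by simpa using hbal i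
  rw [this, dotProduct_zero]

theorem sum_dotProduct_self_of_normalized {X : Fin n → ι → ℚ} (hnorm : ∀ i, ∑ r, X r i ^ 2 = n) :
    ∑ r, X r ⬝ᵥ X r = n * Fintype.card ι := by
  simp only [dotProduct, ← sq]
  rw [sum_comm]
  simp [hnorm, mul_comm]

/-- The squared Frobenius distance of `XXᵀ` from `(m / (n - 1)) (nI - J)`, for a design `X` with
`m` columns. It vanishes exactly when `X` attains the lower bound `Es2LowerBound n m`. -/
def gramDefect (X : Fin n → ι → ℚ) : ℚ :=
  ∑ r, ∑ s, (X r ⬝ᵥ X s - Fintype.card ι / (n - 1) * scaledCentering r s) ^ 2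

theorem gramDefect_nonneg (X : Fin n → ι → ℚ) : 0 ≤ gramDefect X :=
  sum_nonneg fun _ _ => sum_nonneg fun _ _ => sq_nonneg _

/-- The Nguyen–Tang–Wu lower bound for `E(s²)` over the balanced `n × m` designs whose columns
have squared length `n`. The quotient is meaningful for `1 < n` and `1 < m`. -/
def Es2LowerBound (n m : ℕ) : ℚ := n ^ 2 * (m - n + 1) / ((n - 1) * (m - 1))

variable [DecidableEq ι]

theorem Es2_eq_of_normalized {X : Fin n → ι → ℚ} (hnorm : ∀ i, ∑ r, X r i ^ 2 = n) :
    Es2 X = (∑ r, ∑ s, (X r ⬝ᵥ X s) ^ 2 - Fintype.card ι * n ^ 2) /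
      (Fintype.card ι * (Fintype.card ι - 1)) := by
  have diag : (Fintype.card ι : ℚ) * n ^ 2 =
      ∑ i, ∑ j, if i = j then (∑ r, X r i * X r j) ^ 2 else 0 := by
    simp [← sq, hnorm]
  rw [Es2, sum_sq_dotProduct_rows, diag]
  simp only [← sum_sub_distrib]
  congr 1
  refine sum_congr rfl fun i _ => sum_congr rfl fun j _ => ?_
  by_cases h : i = j <;> simp [h]

theorem Es2_eq_lowerBound_add_gramDefect (hn : 1 < n) (hι : 1 < Fintype.card ι)
    {X : Fin n → ι → ℚ} (hnorm : ∀ i, ∑ r, X r i ^ 2 = n) (hbal : ∀ i, ∑ r, X r i = 0) :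
    Es2 X = Es2LowerBound n (Fintype.card ι) +
      gramDefect X / (Fintype.card ι * (Fintype.card ι - 1)) := by
  rw [Es2_eq_of_normalized hnorm, gramDefect,
    sum_sq_sub_mul_scaledCentering _ (sum_dotProduct_rows_of_balanced hbal),
    sum_dotProduct_self_of_normalized hnorm, Es2LowerBound]
  have hn' : (n : ℚ) - 1 ≠ 0 := sub_ne_zero.2 (by exact_mod_cast hn.ne')
  have hι' : (Fintype.card ι : ℚ) - 1 ≠ 0 := sub_ne_zero.2 (by exact_mod_cast hι.ne')
  have hι₀ : (Fintype.card ι : ℚ) ≠ 0 := by exact_mod_cast (zero_lt_one.trans hι).ne'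
  field_simp
  ring

theorem Es2LowerBound_le_Es2 (hn : 1 < n) (hι : 1 < Fintype.card ι)
    {X : Fin n → ι → ℚ} (hnorm : ∀ i, ∑ r, X r i ^ 2 = n) (hbal : ∀ i, ∑ r, X r i = 0) :
    Es2LowerBound n (Fintype.card ι) ≤ Es2 X := by
  rw [Es2_eq_lowerBound_add_gramDefect hn hι hnorm hbal]
  have hι' : (1 : ℚ) ≤ Fintype.card ι := by exact_mod_cast hι.le
  exact le_add_of_nonneg_right <|
    div_nonneg (gramDefect_nonneg X) (mul_nonneg (by positivity) (sub_nonneg.2 hι'))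

theorem Es2_eq_lowerBound_of_dotProduct_rows (hn : 1 < n) (hι : 1 < Fintype.card ι)
    {X : Fin n → ι → ℚ} (hnorm : ∀ i, ∑ r, X r i ^ 2 = n) (hbal : ∀ i, ∑ r, X r i = 0)
    (hgram : ∀ r s, X r ⬝ᵥ X s = Fintype.card ι / (n - 1) * scaledCentering r s) :
    Es2 X = Es2LowerBound n (Fintype.card ι) := by
  rw [Es2_eq_lowerBound_add_gramDefect hn hι hnorm hbal]
  simp [gramDefect, hgram]

end GramDefect

section Interactions

variable {n : ℕ} {κ : Type} [LinearOrder κ]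

/-- The design `A` augmented with the interaction columns of all unordered pairs of its columns,
each pair being listed in increasing order. -/
def withInteractions (A : Fin n → κ → ℚ) : Fin n → κ ⊕ {p : κ × κ // p.1 < p.2} → ℚ :=
  fun r => Sum.elim (A r) fun p => A r p.1.1 * A r p.1.2

theorem withInteractions_sq_eq_one {A : Fin n → κ → ℚ} (hA : ∀ r j, A r j ^ 2 = 1) (r : Fin n)
    (i : κ ⊕ {p : κ × κ // p.1 < p.2}) : withInteractions A r i ^ 2 = 1 := by
  rcases i with j | p <;> simp [withInteractions, mul_pow, hA]

theorem sum_withInteractions_eq_zero {A : Fin n → κ → ℚ} (hbal : ∀ j, ∑ r, A r j = 0)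
    (horth : ∀ j k, j ≠ k → ∑ r, A r j * A r k = 0) (i : κ ⊕ {p : κ × κ // p.1 < p.2}) :
    ∑ r, withInteractions A r i = 0 := by
  rcases i with j | p
  · exact hbal j
  · exact horth _ _ p.2.ne

variable [Fintype κ]

theorem withInteractions_dotProduct {A : Fin n → κ → ℚ} (hA : ∀ r j, A r j ^ 2 = 1)
    (r s : Fin n) :
    withInteractions A r ⬝ᵥ withInteractions A s =
      ((A r ⬝ᵥ A s + 1) ^ 2 - (Fintype.card κ + 1)) / 2 := by
  have pairs := sum_sq_eq_sum_sq_add_two_mul_sum_lt fun j => A r j * A s j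
  simp only [mul_pow, hA, mul_one, sum_const, card_univ, nsmul_eq_mul] at pairs
  have split : withInteractions A r ⬝ᵥ withInteractions A s = A r ⬝ᵥ A s +
      ∑ p : {p : κ × κ // p.1 < p.2}, A r p.1.1 * A s p.1.1 * (A r p.1.2 * A s p.1.2) := by
    simp [withInteractions, dotProduct, mul_mul_mul_comm]
  rw [← dotProduct] at pairs
  rw [split]
  linear_combination (-1 / 2) * pairs

theorem card_sum_pairs_lt :
    Fintype.card (κ ⊕ {p : κ × κ // p.1 < p.2}) = (Fintype.card κ + 1).choose 2 := by
  have pairs := sum_sq_eq_sum_sq_add_two_mul_sum_lt fun _ : κ => (1 : ℕ)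
  simp only [sum_const, card_univ, smul_eq_mul, mul_one, one_pow] at pairs
  rw [Fintype.card_sum, Nat.choose_two_right, Nat.add_sub_cancel]
  refine (Nat.div_eq_of_eq_mul_right two_pos ?_).symm
  linarith

end Interactions

theorem card_ne_add_one {κ : Type*} [Fintype κ] [DecidableEq κ] (c : κ) :
    Fintype.card {j // j ≠ c} + 1 = Fintype.card κ := by
  rw [← Fintype.card_option, Fintype.card_congr (Equiv.optionSubtypeNe c)]

section SaturatedArray

variable {n : ℕ} {κ : Type} [Fintype κ] {H : Fin n → κ → ℚ}

theorem dotProduct_rows_of_saturated (hκ : Fintype.card κ + 1 = n)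
    (hnorm : ∀ j, ∑ r, H r j ^ 2 = n) (hbal : ∀ j, ∑ r, H r j = 0)
    (horth : ∀ j k, j ≠ k → ∑ r, H r j * H r k = 0) (r s : Fin n) :
    H r ⬝ᵥ H s = scaledCentering r s := by
  classical
  have hn : (n : ℚ) ≠ 0 := by exact_mod_cast (hκ ▸ Nat.succ_ne_zero _ : n ≠ 0)
  let M : Matrix (Fin n) (Option κ) ℚ := Matrix.of fun r j => j.elim 1 (H r)
  have orthonormal_cols : ((n : ℚ)⁻¹ • M.transpose) * M = 1 := by
    ext (_ | j) (_ | k)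
    · simp [M, Matrix.mul_apply, hn]
    · simp [M, Matrix.mul_apply, ← mul_sum, hbal]
    · simp [M, Matrix.mul_apply, ← mul_sum, hbal]
    · rcases eq_or_ne j k with rfl | hjk
      · simp [M, Matrix.mul_apply, mul_assoc, ← mul_sum, ← sq, hnorm, hn]
      · simp [M, Matrix.mul_apply, mul_assoc, ← mul_sum, horth j k hjk, hjk]
  have orthonormal_rows : M * ((n : ℚ)⁻¹ • M.transpose) = 1 :=
    (Matrix.mul_eq_one_comm_of_card_eq _ _ _ (by simp [hκ])).1 orthonormal_cols
  have entry : (n : ℚ)⁻¹ * (1 + H r ⬝ᵥ H s) = if r = s then 1 else 0 := by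
    simpa [M, Matrix.mul_apply, Matrix.one_apply, dotProduct, mul_left_comm, ← mul_sum,
      ← mul_add] using congrFun₂ orthonormal_rows r s
  rw [inv_mul_eq_iff_eq_mul₀ hn, mul_ite, mul_one, mul_zero] at entry
  rw [scaledCentering, ← entry, add_sub_cancel_left]

/-- The design obtained from `H` by deleting the column `c`. -/
def deleteColumn (H : Fin n → κ → ℚ) (c : κ) : Fin n → {j // j ≠ c} → ℚ :=
  fun r j => H r j

theorem deleteColumn_dotProduct [DecidableEq κ] (H : Fin n → κ → ℚ) (c : κ) (r s : Fin n) :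
    deleteColumn H c r ⬝ᵥ deleteColumn H c s = H r ⬝ᵥ H s - H r c * H s c := by
  rw [eq_sub_iff_add_eq', dotProduct, dotProduct, Fintype.sum_eq_add_sum_subtype_ne _ c]
  rfl

variable [LinearOrder κ]

theorem withInteractions_deleteColumn_dotProduct (hκ : Fintype.card κ + 1 = n)
    (hsq : ∀ r j, H r j ^ 2 = 1) (hbal : ∀ j, ∑ r, H r j = 0)
    (horth : ∀ j k, j ≠ k → ∑ r, H r j * H r k = 0) (c : κ) (r s : Fin n) :
    withInteractions (deleteColumn H c) r ⬝ᵥ withInteractions (deleteColumn H c) s =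
      (n - 2) / 2 * scaledCentering r s := by
  have card_left : (Fintype.card {j // j ≠ c} : ℚ) = n - 2 := by
    have := card_ne_add_one c
    exact eq_sub_of_add_eq (by exact_mod_cast (by omega : Fintype.card {j // j ≠ c} + 2 = n))
  rw [withInteractions_dotProduct (A := deleteColumn H c) fun r j => hsq r j,
    deleteColumn_dotProduct,
    dotProduct_rows_of_saturated hκ (normalized_of_sq_eq_one hsq) hbal horth, card_left,
    scaledCentering]
  rcases eq_or_ne r s with rfl | hrs
  · rw [if_pos rfl, ← sq, hsq]
    ring
  · have deleted : (H r c * H s c) ^ 2 = 1 := by rw [mul_pow, hsq, hsq, one_mul]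
    rw [if_neg hrs]
    linear_combination (1 / 2) * deleted

end SaturatedArray

theorem cast_choose_pred_two {n : ℕ} (hn : 1 ≤ n) :
    ((n - 1).choose 2 : ℚ) = (n - 1) * (n - 2) / 2 := by
  rw [Nat.cast_choose_two, Nat.cast_pred hn]
  ring

theorem Es2LowerBound_choose_two {n : ℕ} (hn : 4 ≤ n) :
    Es2LowerBound n ((n - 1).choose 2) = n * (n - 4) / (n - 3) := by
  have hn' : (4 : ℚ) ≤ n := by exact_mod_cast hn
  have pred_ne : (n : ℚ) - 1 ≠ 0 := by linarith
  have sub_three_ne : (n : ℚ) - 3 ≠ 0 := by linarith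
  have n_ne : (n : ℚ) ≠ 0 := by linarith
  have columns_sub_one : ((n : ℚ) - 1) * (n - 2) / 2 - 1 = n * (n - 3) / 2 := by ring
  rw [Es2LowerBound, cast_choose_pred_two (by omega), columns_sub_one]
  field_simp
  ring

theorem one_lt_choose_pred_two {n : ℕ} (hn : 4 ≤ n) : 1 < (n - 1).choose 2 :=
  lt_of_lt_of_le (by decide) (Nat.choose_le_choose 2 (by omega : 3 ≤ n - 1))

theorem Es2_withInteractions_deleteColumn {n : ℕ} (hn : 4 ≤ n) {κ : Type} [Fintype κ]
    [LinearOrder κ] (hκ : Fintype.card κ + 1 = n) {H : Fin n → κ → ℚ}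
    (hsq : ∀ r j, H r j ^ 2 = 1) (hbal : ∀ j, ∑ r, H r j = 0)
    (horth : ∀ j k, j ≠ k → ∑ r, H r j * H r k = 0) (c : κ) :
    Es2 (withInteractions (deleteColumn H c)) = Es2LowerBound n ((n - 1).choose 2) := by
  have card_columns : Fintype.card ({j // j ≠ c} ⊕
      {p : {j // j ≠ c} × {j // j ≠ c} // p.1 < p.2}) = (n - 1).choose 2 := by
    rw [card_sum_pairs_lt, card_ne_add_one, ← hκ, Nat.add_sub_cancel]
  have gram (r s : Fin n) :
      withInteractions (deleteColumn H c) r ⬝ᵥ withInteractions (deleteColumn H c) s =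
        (n - 1).choose 2 / (n - 1) * scaledCentering r s := by
    have pred_ne : (n : ℚ) - 1 ≠ 0 := sub_ne_zero.2 (by exact_mod_cast (by omega : n ≠ 1))
    rw [withInteractions_deleteColumn_dotProduct hκ hsq hbal horth,
      cast_choose_pred_two (by omega), mul_div_assoc, mul_div_cancel_left₀ _ pred_ne]
  have one_lt_columns := one_lt_choose_pred_two hn
  rw [← card_columns] at one_lt_columns gram ⊢
  exact Es2_eq_lowerBound_of_dotProduct_rows (by omega) one_lt_columns
    (normalized_of_sq_eq_one <| withInteractions_sq_eq_one fun r j => hsq r j)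
    (sum_withInteractions_eq_zero (fun j => hbal j)
      fun j k hjk => horth j k (Subtype.coe_ne_coe.2 hjk)) gram

theorem Es2_optimal_full_delete_one_general {n : ℕ} (hn : 4 ≤ n) {κ : Type} [Fintype κ]
    [LinearOrder κ] (hκ : Fintype.card κ + 1 = n) (H : Fin n → κ → ℚ)
    (hpm : ∀ r j, H r j = 1 ∨ H r j = -1) (hbal : ∀ j, ∑ r, H r j = 0)
    (horth : ∀ j k, j ≠ k → ∑ r, H r j * H r k = 0) (c : κ) :
    Es2 (withInteractions (deleteColumn H c)) = n * (n - 4) / (n - 3) ∧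
      ∀ {ι : Type} [Fintype ι] [DecidableEq ι] (Y : Fin n → ι → ℚ),
        Fintype.card ι = (n - 1).choose 2 → (∀ i, ∑ r, Y r i ^ 2 = n) → (∀ i, ∑ r, Y r i = 0) →
          Es2 (withInteractions (deleteColumn H c)) ≤ Es2 Y := by
  have hsq (r : Fin n) (j : κ) : H r j ^ 2 = 1 := sq_eq_one_iff.2 (hpm r j)
  have attained := Es2_withInteractions_deleteColumn hn hκ hsq hbal horth c
  refine ⟨attained.trans (Es2LowerBound_choose_two hn), fun Y hY hnorm hbalY => ?_⟩
  rw [attained, ← hY]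
  exact Es2LowerBound_le_Es2 (by omega) (hY ▸ one_lt_choose_pred_two hn) hnorm hbalY

/-- Deleting one fixed column from a saturated `OA(n, n-1, 2, 2)` gives
`H'` with `n-2` columns; augmenting `H'` with all its two-column interactions yields
an `n × ((n-2)(n-1)/2)` design `X` with `E(s²)(X) = n(n-4)/(n-3)`, which is
`E(s²)`-optimal among all balanced `n × ((n-2)(n-1)/2)` two-level designs. -/
theorem Es2_optimal_full_delete_one (n : ℕ) (hn : 8 ≤ n) (h4 : 4 ∣ n)
    (H : Fin n → Fin (n - 1) → ℚ)
    (hpm : ∀ i j, H i j = 1 ∨ H i j = -1)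
    (hbal : ∀ j, ∑ i : Fin n, H i j = 0)
    (horth : ∀ j k : Fin (n - 1), j ≠ k → ∑ i : Fin n, H i j * H i k = 0)
    (cdel : Fin (n - 1))
    (X : Fin n → ({j : Fin (n - 1) // j ≠ cdel} ⊕
      {p : {j : Fin (n - 1) // j ≠ cdel} × {j : Fin (n - 1) // j ≠ cdel} //
        p.1.1 < p.2.1}) → ℚ)
    (hX : ∀ r, X r = Sum.elim (fun j => H r j.1) (fun p => H r p.1.1.1 * H r p.1.2.1)) :
    Es2 X = (n : ℚ) * ((n : ℚ) - 4) / ((n : ℚ) - 3) ∧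
      ∀ Y : Fin n → Fin ((n - 2) * (n - 1) / 2) → ℚ,
        (∀ i j, Y i j = 1 ∨ Y i j = -1) → (∀ j, ∑ i : Fin n, Y i j = 0) →
          Es2 X ≤ Es2 Y := by
  obtain rfl : X = withInteractions (deleteColumn H cdel) := funext hX
  obtain ⟨value, optimal⟩ := Es2_optimal_full_delete_one_general (by omega)
    (by rw [Fintype.card_fin]; omega) H hpm hbal horth cdel
  exact ⟨value, fun Y hY => optimal Y (by simp [Nat.choose_two_right, Nat.sub_sub, mul_comm])
    (normalized_of_sq_eq_one fun r j => sq_eq_one_iff.2 (hY r j))⟩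
end
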